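/- arXiv:2008.13098 — 2 statements merged into one kernel-verified Lean document; each statement's English description precedes it below -/
import Mathlib

section
/- Adaptive fast gradient method with an inexact model (general bound). Let x_0 = y_0 = u_0 ∈ Q, A_0 = α_0 = 0, and for k ≥ 0 let L_{k+1} > 0, let α_{k+1} be the largest root of A_k + α = L_{k+1} α², A_{k+1} = A_k + α_{k+1}, y_{k+1} = (α_{k+1} u_k + A_k x_k)/A_{k+1}, u_{k+1} a δ̃_k-inexact minimizer on Q of φ_{k+1}(x) = V[u_k](x) + α_{k+1} ψ_{δ_k}(x, y_{k+1}), and x_{k+1} = (α_{k+1} u_{k+1} + A_k x_k)/A_{k+1}. Suppose that for every k the function ψ_{δ_k}(·, y_{k+1}) with value f_{δ_k}(y_{k+1}) is a (δ_k, L̄_{k+1}, ‖·‖)-model of f at y_{k+1} for some L̄_{k+1} > 0, and that f_{δ_k}(x_{k+1}) ≤ f_{δ_k}(y_{k+1}) + ψ_{δ_k}(x_{k+1}, y_{k+1}) + (L_{k+1}/2)‖x_{k+1} − y_{k+1}‖² + δ_k. Let x_* be a minimizer of f on Q with V[x_0](x_*) ≤ R². Then f(x_N) − f(x_*) ≤ R²/A_N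 + (Σ_{k=0}^{N-1} δ̃_k)/A_N + (2 Σ_{k=0}^{N-1} δ_k A_{k+1})/A_N. -/
/-!
This is the estimate-sequence argument for accelerated methods, with the potential
`A k * (f (x k) - f p) + V[u k](p)`, where `p` is any comparison point of `Q`.

Since `A (k + 1) = L (k + 1) * α (k + 1) ^ 2` and
`x (k + 1) - y (k + 1) = (α (k + 1) / A (k + 1)) • (u (k + 1) - u k)`, the quadratic term of the
descent condition, multiplied by `A (k + 1)`, is exactly `‖u (k + 1) - u k‖² / 2`, and strong
convexity of the prox-function bounds this by `V[u k](u (k + 1))`. That divergence also appears in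
the prox inequality for `u (k + 1)`, where it cancels. Hence the potential grows by at most
`δt k + 2 * δ k * A (k + 1)` at step `k`.
-/

open Finset RealInnerProductSpace

section Prox

open Filter Topology

variable {E : Type*} [NormedAddCommGroup E] [NormedSpace ℝ E] {Q : Set E}

/-- The Bregman divergence `V[p](z)` of a prox-function `d`. The derivative `d'` is data, because
the derivative of `d` within a set need not be unique. -/
def bregmanDivergence (d : E → ℝ) (d' : E → E →L[ℝ] ℝ) (p z : E) : ℝ :=
  d z - d p - d' p (z - p)

/-- `d` is `1`-strongly convex on `Q` with respect to `nrm`. Mathlib's `StrongConvexOn` uses the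
norm of the ambient space, whereas the prox-function is measured in an unrelated norm, given here
as a plain function. -/
def StrongConvexOnWrt (nrm : E → ℝ) (Q : Set E) (d : E → ℝ) : Prop :=
  Convex ℝ Q ∧ ∀ z ∈ Q, ∀ w ∈ Q, ∀ t : ℝ, t ∈ Set.Icc (0 : ℝ) 1 →
    d (t • z + (1 - t) • w) ≤ t * d z + (1 - t) * d w - t * (1 - t) / 2 * nrm (z - w) ^ 2

/-- `q` is an `e`-inexact minimizer of `φ` on `Q`: some subgradient `h` of `φ` at `q`, relative to
`Q`, satisfies the first-order optimality condition up to `e`. -/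
def IsInexactMinimizerOn (φ : E → ℝ) (Q : Set E) (e : ℝ) (q : E) : Prop :=
  q ∈ Q ∧ ∃ h : E →L[ℝ] ℝ,
    (∀ z ∈ Q, φ q + h (z - q) ≤ φ z) ∧ ∀ z ∈ Q, -e ≤ h (z - q)

lemma tendsto_segment_slope {d : E → ℝ} {d' : E →L[ℝ] ℝ} {p z : E} (hQ : Convex ℝ Q)
    (hp : p ∈ Q) (hz : z ∈ Q) (hd : HasFDerivWithinAt d d' Q p) :
    Tendsto (fun t : ℝ ↦ (d (p + t • (z - p)) - d p) / t) (𝓝[>] 0) (𝓝 (d' (z - p))) := by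
  have hzero : Tendsto (fun t : ℝ ↦ t • (z - p)) (𝓝[>] 0) (𝓝 0) :=
    (Continuous.tendsto' (continuous_id.smul continuous_const) _ _
      (zero_smul ℝ _)).mono_left nhdsWithin_le_nhds
  have hmem : ∀ᶠ t : ℝ in 𝓝[>] 0, p + t • (z - p) ∈ Q := by
    filter_upwards [Ioc_mem_nhdsGT zero_lt_one] with t ht
    exact hQ.add_smul_sub_mem hp hz ⟨ht.1.le, ht.2⟩
  have hdir : Tendsto (fun t : ℝ ↦ t⁻¹ • t • (z - p)) (𝓝[>] 0) (𝓝 (z - p)) := by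
    refine tendsto_const_nhds.congr' ?_
    filter_upwards [self_mem_nhdsWithin] with t ht
    exact (inv_smul_smul₀ (ne_of_gt ht) _).symm
  simpa only [smul_eq_mul, ← div_eq_inv_mul] using hd.lim hzero hmem hdir

namespace StrongConvexOnWrt

variable {nrm d : E → ℝ} {d' : E → E →L[ℝ] ℝ} {p z : E}

lemma sq_div_two_le_bregmanDivergence (h : StrongConvexOnWrt nrm Q d) (hp : p ∈ Q) (hz : z ∈ Q)
    (hd : HasFDerivWithinAt d (d' p) Q p) :
    nrm (z - p) ^ 2 / 2 ≤ bregmanDivergence d d' p z := by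
  set B : ℝ := nrm (z - p) ^ 2 / 2 with hB
  have hupper : Tendsto (fun t : ℝ ↦ d z - d p - (1 - t) * B) (𝓝[>] 0) (𝓝 (d z - d p - B)) :=
    (Continuous.tendsto' (by fun_prop) _ _ (by ring)).mono_left nhdsWithin_le_nhds
  have hle : d' p (z - p) ≤ d z - d p - B := by
    refine le_of_tendsto_of_tendsto (tendsto_segment_slope h.1 hp hz hd) hupper ?_
    filter_upwards [Ioc_mem_nhdsGT zero_lt_one] with t ht
    have hconv := h.2 z hz p hp t ⟨ht.1.le, ht.2⟩
    rw [show t • z + (1 - t) • p = p + t • (z - p) by module] at hconv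
    rw [div_le_iff₀ ht.1]
    linear_combination hconv + t * (1 - t) * hB
  unfold bregmanDivergence
  linarith

lemma bregmanDivergence_nonneg (h : StrongConvexOnWrt nrm Q d) (hp : p ∈ Q) (hz : z ∈ Q)
    (hd : HasFDerivWithinAt d (d' p) Q p) : 0 ≤ bregmanDivergence d d' p z :=
  le_trans (by positivity) (h.sq_div_two_le_bregmanDivergence hp hz hd)

end StrongConvexOnWrt

lemma bregmanDivergence_three_point (d : E → ℝ) (d' : E → E →L[ℝ] ℝ) (p q z : E) :
    bregmanDivergence d d' p z =
      bregmanDivergence d d' p q + bregmanDivergence d d' q z + (d' q - d' p) (z - q) := by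
  simp only [bregmanDivergence, sub_apply, map_sub]
  ring

lemma hasFDerivWithinAt_bregmanDivergence {d : E → ℝ} {d' : E → E →L[ℝ] ℝ} (p : E) {q : E}
    (hd : HasFDerivWithinAt d (d' q) Q q) :
    HasFDerivWithinAt (bregmanDivergence d d' p) (d' q - d' p) Q q :=
  (hd.sub_const (d p)).sub ((d' p).hasFDerivWithinAt.comp q
    ((hasFDerivWithinAt_id q Q).sub_const p) (Set.mapsTo_univ _ _))

namespace IsInexactMinimizerOn

variable {ψ : E → ℝ} {e : ℝ} {q z : E}

lemma neg_le_fderiv_add_sub {D : E → ℝ} {D' : E →L[ℝ] ℝ}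
    (hq : IsInexactMinimizerOn (fun w ↦ D w + ψ w) Q e q) (hD : HasFDerivWithinAt D D' Q q)
    (hψ : ConvexOn ℝ Q ψ) (hz : z ∈ Q) :
    -e ≤ D' (z - q) + (ψ z - ψ q) := by
  obtain ⟨hqQ, h, hsub, hopt⟩ := hq
  suffices -e - (ψ z - ψ q) ≤ D' (z - q) by linarith
  refine ge_of_tendsto (tendsto_segment_slope hψ.1 hqQ hz hD) ?_
  filter_upwards [Ioc_mem_nhdsGT zero_lt_one] with t ⟨ht₀, ht₁⟩
  have hsubgrad := hsub _ (hψ.1.add_smul_sub_mem hqQ hz ⟨ht₀.le, ht₁⟩)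
  rw [add_sub_cancel_left, map_smul, smul_eq_mul] at hsubgrad
  have hchord : ψ (q + t • (z - q)) ≤ t * ψ z + (1 - t) * ψ q := by
    rw [show q + t • (z - q) = t • z + (1 - t) • q by module]
    exact hψ.2 hz hqQ ht₀.le (sub_nonneg.2 ht₁) (add_sub_cancel _ _)
  rw [le_div_iff₀ ht₀]
  linear_combination hsubgrad + hchord + t * hopt z hz

lemma bregmanDivergence_prox_le {d : E → ℝ} {d' : E → E →L[ℝ] ℝ} {p : E} {a : ℝ}
    (hq : IsInexactMinimizerOn (fun w ↦ bregmanDivergence d d' p w + a * ψ w) Q e q)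
    (ha : 0 ≤ a) (hψ : ConvexOn ℝ Q ψ) (hd : HasFDerivWithinAt d (d' q) Q q) (hz : z ∈ Q) :
    bregmanDivergence d d' p q + a * ψ q + bregmanDivergence d d' q z ≤
      bregmanDivergence d d' p z + a * ψ z + e := by
  have hopt : -e ≤ (d' q - d' p) (z - q) + (a * ψ z - a * ψ q) :=
    hq.neg_le_fderiv_add_sub (hasFDerivWithinAt_bregmanDivergence p hd) (hψ.smul ha) hz
  linarith [bregmanDivergence_three_point d d' p q z]

end IsInexactMinimizerOn

end Prox

/-- The coefficients of the adaptive fast gradient method for the smoothness estimates `L`. As in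
the paper, `L` and the step sizes `α` are indexed from `1`, the weights `A` from `0`. -/
structure IsStepSizeSequence (L α A : ℕ → ℝ) : Prop where
  L_pos (k : ℕ) : 0 < L (k + 1)
  A_zero : A 0 = 0
  isGreatest (k : ℕ) : IsGreatest {β : ℝ | A k + β = L (k + 1) * β ^ 2} (α (k + 1))
  A_succ (k : ℕ) : A (k + 1) = A k + α (k + 1)

lemma one_div_two_mul_le_of_isGreatest {A L α : ℝ} (hL : 0 < L)
    (hα : IsGreatest {β : ℝ | A + β = L * β ^ 2} α) : 1 / (2 * L) ≤ α := by
  obtain ⟨hroot, hmax⟩ := hα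
  -- By Vieta, the other root is `1 / L - α`.
  have hother : 1 / L - α ≤ α := hmax <| by
    rw [Set.mem_ofPred_eq] at hroot ⊢
    field_simp
    linear_combination L * hroot
  have : 1 / (2 * L) = 1 / L / 2 := by ring
  linarith

namespace IsStepSizeSequence

variable {L α A : ℕ → ℝ} (h : IsStepSizeSequence L α A)
include h

lemma α_pos (k : ℕ) : 0 < α (k + 1) :=
  have hL := h.L_pos k
  lt_of_lt_of_le (by positivity) (one_div_two_mul_le_of_isGreatest hL (h.isGreatest k))

lemma A_nonneg (k : ℕ) : 0 ≤ A k := by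
  have hmono : Monotone A := monotone_nat_of_le_succ fun j ↦ by
    rw [h.A_succ]
    exact le_add_of_nonneg_right (h.α_pos j).le
  exact h.A_zero.ge.trans (hmono k.zero_le)

lemma A_pos {k : ℕ} (hk : 0 < k) : 0 < A k := by
  obtain ⟨j, rfl⟩ := Nat.exists_eq_succ_of_ne_zero hk.ne'
  rw [Nat.succ_eq_add_one, h.A_succ]
  exact add_pos_of_nonneg_of_pos (h.A_nonneg j) (h.α_pos j)

lemma A_succ_eq_mul_sq (k : ℕ) : A (k + 1) = L (k + 1) * α (k + 1) ^ 2 :=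
  (h.A_succ k).trans (h.isGreatest k).1

end IsStepSizeSequence

section Descent

variable {E : Type*} [AddCommGroup E] [Module ℝ E]

lemma mul_map_weighted_average_le {Q : Set E} {ψ : E → ℝ} {a b : ℝ} {v w : E}
    (hψ : ConvexOn ℝ Q ψ) (hv : v ∈ Q) (hw : w ∈ Q) (ha : 0 ≤ a) (hb : 0 ≤ b)
    (hab : 0 < a + b) :
    (a + b) * ψ ((a + b)⁻¹ • (a • v + b • w)) ≤ a * ψ v + b * ψ w := by
  have hconv := (convexOn_iff_div.1 hψ).2 hv hw ha hb hab
  rw [show (a / (a + b)) • v + (b / (a + b)) • w = (a + b)⁻¹ • (a • v + b • w) by module] at hconv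
  calc (a + b) * ψ ((a + b)⁻¹ • (a • v + b • w))
      ≤ (a + b) * ((a / (a + b)) • ψ v + (b / (a + b)) • ψ w) := by gcongr
    _ = a * ψ v + b * ψ w := by simp only [smul_eq_mul]; field_simp

lemma mul_half_sq_extrapolation_eq {nrm : E → ℝ}
    (hnrm : ∀ (c : ℝ) z, nrm (c • z) = |c| * nrm z) {L α A : ℝ} (hA : A ≠ 0)
    (hroot : A = L * α ^ 2) (v : E) :
    A * (L / 2 * nrm ((α / A) • v) ^ 2) = nrm v ^ 2 / 2 := by
  rw [hnrm, mul_pow, sq_abs]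
  calc A * (L / 2 * ((α / A) ^ 2 * nrm v ^ 2))
      = L * α ^ 2 / A * (nrm v ^ 2 / 2) := by field_simp
    _ = nrm v ^ 2 / 2 := by rw [← hroot, div_self hA, one_mul]

lemma mul_le_of_model_descent {Q : Set E} {f ψ nrm : E → ℝ} {c ε L α A A' : ℝ}
    {x x' y u u' : E} (hnrm : ∀ (c : ℝ) z, nrm (c • z) = |c| * nrm z)
    (hA : 0 ≤ A) (hα : 0 < α) (hA' : A' = A + α) (hroot : A' = L * α ^ 2)
    (hy : y = A'⁻¹ • (α • u + A • x)) (hx' : x' = A'⁻¹ • (α • u' + A • x))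
    (hψ : ConvexOn ℝ Q ψ) (hx : x ∈ Q) (hu' : u' ∈ Q) (hmodel : c + ψ x ≤ f x)
    (hdescent : f x' ≤ c + ψ x' + L / 2 * nrm (x' - y) ^ 2 + ε) :
    A' * f x' ≤ A * f x + α * (c + ψ u') + nrm (u' - u) ^ 2 / 2 + A' * ε := by
  have hpos : 0 < A' := by linarith
  have hxy : x' - y = (α / A') • (u' - u) := by rw [hx', hy]; module
  have hquad : A' * (L / 2 * nrm (x' - y) ^ 2) = nrm (u' - u) ^ 2 / 2 := by
    rw [hxy, mul_half_sq_extrapolation_eq hnrm hpos.ne' hroot]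
  have hconv : A' * ψ x' ≤ α * ψ u' + A * ψ x := by
    rw [add_comm] at hA'
    rw [hx', hA']
    exact mul_map_weighted_average_le hψ hu' hx hα.le hA (hA' ▸ hpos)
  calc A' * f x' ≤ A' * (c + ψ x' + L / 2 * nrm (x' - y) ^ 2 + ε) := by gcongr
    _ = A' * c + A' * ψ x' + nrm (u' - u) ^ 2 / 2 + A' * ε := by rw [← hquad]; ring
    _ ≤ A' * c + (α * ψ u' + A * ψ x) + nrm (u' - u) ^ 2 / 2 + A' * ε := by gcongr
    _ = A * (c + ψ x) + α * (c + ψ u') + nrm (u' - u) ^ 2 / 2 + A' * ε := by rw [hA']; ring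
    _ ≤ A * f x + α * (c + ψ u') + nrm (u' - u) ^ 2 / 2 + A' * ε := by gcongr

end Descent

theorem adaptive_fast_gradient_method_general_bound_general
    {E : Type*} [NormedAddCommGroup E] [NormedSpace ℝ E] {Q : Set E} {f nrm d : E → ℝ}
    (hnrm : ∀ (c : ℝ) z, nrm (c • z) = |c| * nrm z)
    {d' : E → E →L[ℝ] ℝ} (hd : ∀ z ∈ Q, HasFDerivWithinAt d (d' z) Q z)
    (hd_strong : StrongConvexOnWrt nrm Q d)
    {L α A : ℕ → ℝ} (hA : IsStepSizeSequence L α A) {x y u : ℕ → E} {δ δt : ℕ → ℝ}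
    (hxQ : ∀ k, x k ∈ Q) (hu₀ : u 0 ∈ Q)
    (hy : ∀ k, y (k + 1) = (A (k + 1))⁻¹ • (α (k + 1) • u k + A k • x k))
    (hx : ∀ k, x (k + 1) = (A (k + 1))⁻¹ • (α (k + 1) • u (k + 1) + A k • x k))
    {ψ : ℕ → E → ℝ} {fδ : ℕ → ℝ} (hψ : ∀ k, ConvexOn ℝ Q (ψ k))
    (hmodel : ∀ k, ∀ z ∈ Q, fδ k + ψ k z ≤ f z)
    (hdescent : ∀ k, f (x (k + 1)) ≤ fδ k + ψ k (x (k + 1)) +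
      L (k + 1) / 2 * nrm (x (k + 1) - y (k + 1)) ^ 2 + 2 * δ k)
    (hmin : ∀ k, IsInexactMinimizerOn
      (fun z ↦ bregmanDivergence d d' (u k) z + α (k + 1) * ψ k z) Q (δt k) (u (k + 1)))
    {p : E} (hp : p ∈ Q) {R : ℝ} (hR : bregmanDivergence d d' (u 0) p ≤ R ^ 2)
    {N : ℕ} (hN : 0 < N) :
    f (x N) - f p ≤
      R ^ 2 / A N + (∑ k ∈ range N, δt k) / A N +
        (2 * ∑ k ∈ range N, δ k * A (k + 1)) / A N := by
  have huQ : ∀ k, u k ∈ Q := fun k ↦ k.casesOn hu₀ fun k ↦ (hmin k).1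
  let potential : ℕ → ℝ := fun k ↦ A k * (f (x k) - f p) + bregmanDivergence d d' (u k) p
  have hstep : ∀ k, potential (k + 1) - potential k ≤ δt k + 2 * (δ k * A (k + 1)) := by
    intro k
    have hdesc := mul_le_of_model_descent hnrm (hA.A_nonneg k) (hA.α_pos k) (hA.A_succ k)
      (hA.A_succ_eq_mul_sq k) (hy k) (hx k) (hψ k) (hxQ k) (huQ (k + 1)) (hmodel k _ (hxQ k))
      (hdescent k)
    have hprox := (hmin k).bregmanDivergence_prox_le (hA.α_pos k).le (hψ k)
      (hd _ (huQ (k + 1))) hp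
    have hbreg := hd_strong.sq_div_two_le_bregmanDivergence (huQ k) (huQ (k + 1)) (hd _ (huQ k))
    have hlower := mul_le_mul_of_nonneg_left (hmodel k p hp) (hA.α_pos k).le
    simp only [potential]
    linear_combination hdesc + hprox + hbreg + hlower - f p * hA.A_succ k
  have hsum : potential N - potential 0 ≤ ∑ k ∈ range N, (δt k + 2 * (δ k * A (k + 1))) :=
    (sum_range_sub potential N).ge.trans (sum_le_sum fun k _ ↦ hstep k)
  have hnonneg := hd_strong.bregmanDivergence_nonneg (huQ N) hp (hd _ (huQ N))
  simp only [potential, hA.A_zero, zero_mul, zero_add, sum_add_distrib, ← mul_sum] at hsum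
  rw [← add_div, ← add_div, le_div_iff₀ (hA.A_pos hN)]
  linarith

/-- **Adaptive fast gradient method with an inexact model (general bound).**
`ψ k` is the model `ψ_{δ_k}(·, y_{k+1})` with value `fδ k = f_{δ_k}(y_{k+1})`. -/
theorem adaptive_fast_gradient_method_general_bound
    {n : ℕ} (Q : Set (EuclideanSpace ℝ (Fin n)))
    (hQne : Q.Nonempty) (hQclosed : IsClosed Q) (hQconv : Convex ℝ Q)
    (f : EuclideanSpace ℝ (Fin n) → ℝ) (hfconv : ConvexOn ℝ Q f)
    -- a general norm `nrm` on `ℝⁿ`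
    (nrm : EuclideanSpace ℝ (Fin n) → ℝ)
    (hnrm_zero : ∀ z, nrm z = 0 ↔ z = 0)
    (hnrm_smul : ∀ (c : ℝ) z, nrm (c • z) = |c| * nrm z)
    (hnrm_add : ∀ z w, nrm (z + w) ≤ nrm z + nrm w)
    -- the prox-function `d`, continuously differentiable and 1-strongly convex w.r.t. `nrm`
    (d : EuclideanSpace ℝ (Fin n) → ℝ)
    (Dd : EuclideanSpace ℝ (Fin n) → EuclideanSpace ℝ (Fin n))
    (hd_diff : ∀ z ∈ Q, HasGradientWithinAt d (Dd z) Q z)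
    (hd_cont : ContinuousOn Dd Q)
    (hd_strong : ∀ z ∈ Q, ∀ w ∈ Q, ∀ t : ℝ, t ∈ Set.Icc (0 : ℝ) 1 →
      d (t • z + (1 - t) • w) ≤
        t * d z + (1 - t) * d w - t * (1 - t) / 2 * nrm (z - w) ^ 2)
    -- Bregman divergence
    (V : EuclideanSpace ℝ (Fin n) → EuclideanSpace ℝ (Fin n) → ℝ)
    (hV : ∀ y z, V y z = d z - d y - ⟪Dd y, z - y⟫)
    -- the method data
    (N : ℕ) (hN : 0 < N)
    (x y u : ℕ → EuclideanSpace ℝ (Fin n))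
    (hxQ : ∀ k, x k ∈ Q) (hyQ : ∀ k, y k ∈ Q) (huQ : ∀ k, u k ∈ Q)
    (hinit : y 0 = x 0 ∧ u 0 = x 0)
    (δ δt : ℕ → ℝ) (hδ : ∀ k, 0 ≤ δ k) (hδt : ∀ k, 0 ≤ δt k)
    (L : ℕ → ℝ) (hL : ∀ k, 0 < L (k + 1))
    (α A : ℕ → ℝ) (hα0 : α 0 = 0) (hA0 : A 0 = 0)
    -- `α_{k+1}` is the largest root of `A_k + α = L_{k+1} α²`
    (hαroot : ∀ k, A k + α (k + 1) = L (k + 1) * α (k + 1) ^ 2 ∧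
      ∀ β : ℝ, A k + β = L (k + 1) * β ^ 2 → β ≤ α (k + 1))
    (hArec : ∀ k, A (k + 1) = A k + α (k + 1))
    (hy : ∀ k, y (k + 1) = (A (k + 1))⁻¹ • (α (k + 1) • u k + A k • x k))
    -- `ψ k = ψ_{δ_k}(·, y_{k+1})` with value `fδ k = f_{δ_k}(y_{k+1})`:
    -- a `(δ_k, L̄_{k+1}, nrm)`-model of `f` at `y_{k+1}` for some `L̄_{k+1} > 0`
    (ψ : ℕ → EuclideanSpace ℝ (Fin n) → ℝ) (fδ : ℕ → ℝ)
    (hmodel : ∀ k, ∃ Lbar : ℝ, 0 < Lbar ∧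
      ConvexOn ℝ Q (ψ k) ∧ ψ k (y (k + 1)) = 0 ∧
      ∀ z ∈ Q, 0 ≤ f z - (fδ k + ψ k z) ∧
        f z - (fδ k + ψ k z) ≤ Lbar / 2 * nrm (z - y (k + 1)) ^ 2 + δ k)
    -- the value of the model at the next iterate (`f_{δ_k}(x_{k+1})`)
    (fδnext : ℕ → ℝ)
    (hfδnext : ∀ k, 0 ≤ f (x (k + 1)) - fδnext k ∧
      f (x (k + 1)) - fδnext k ≤ δ k)
    -- descent condition
    (hdescent : ∀ k, fδnext k ≤ fδ k + ψ k (x (k + 1)) +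
      L (k + 1) / 2 * nrm (x (k + 1) - y (k + 1)) ^ 2 + δ k)
    -- `u_{k+1}` is a `δ̃_k`-inexact minimizer of `φ_{k+1}(z) = V (u k) z + α_{k+1} ψ k z` on `Q`
    (hmin : ∀ k, ∃ h : EuclideanSpace ℝ (Fin n),
      (∀ z ∈ Q, V (u k) z + α (k + 1) * ψ k z ≥
        V (u k) (u (k + 1)) + α (k + 1) * ψ k (u (k + 1)) + ⟪h, z - u (k + 1)⟫) ∧
      (∀ z ∈ Q, ⟪h, z - u (k + 1)⟫ ≥ -δt k))
    (hx : ∀ k, x (k + 1) = (A (k + 1))⁻¹ • (α (k + 1) • u (k + 1) + A k • x k))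
    -- the optimum
    (xstar : EuclideanSpace ℝ (Fin n)) (hxstarQ : xstar ∈ Q)
    (hxstar : ∀ z ∈ Q, f xstar ≤ f z)
    (R : ℝ) (hR : V (x 0) xstar ≤ R ^ 2) :
    f (x N) - f xstar ≤
      R ^ 2 / A N + (∑ k ∈ range N, δt k) / A N +
        (2 * ∑ k ∈ range N, δ k * A (k + 1)) / A N := by
  obtain rfl : V = bregmanDivergence d fun z ↦ InnerProductSpace.toDual ℝ _ (Dd z) :=
    funext₂ hV
  refine adaptive_fast_gradient_method_general_bound_general hnrm_smul hd_diff
    (fδ := fδ) ⟨hQconv, hd_strong⟩ ⟨hL, hA0, hαroot, hArec⟩ hxQ (huQ 0) hy hx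
    (fun k ↦ (hmodel k).choose_spec.2.1) (fun k z hz ↦ ?_) (fun k ↦ ?_) (fun k ↦ ?_) hxstarQ
    (hinit.2.symm ▸ hR) hN
  · obtain ⟨_, _, _, _, hbounds⟩ := hmodel k
    exact sub_nonneg.1 (hbounds z hz).1
  · linarith [hdescent k, (hfδnext k).2]
  · obtain ⟨h, hsub, hopt⟩ := hmin k
    exact ⟨huQ (k + 1), InnerProductSpace.toDual ℝ _ h, hsub, hopt⟩
end

section
/- Gradient method under relative smoothness with an inexact model. Let d : Q → ℝ be a convex, continuously differentiable function (1-strong convexity is NOT assumed) and V[y](x) = d(x) − d(y) − ⟨∇d(y), x − y⟩. Fix L > 0 and δ, δ̃ ≥ 0, and suppose ψ_δ(·,·) with values f_δ(·) is a (δ, L, V)-model of f on Q, i.e., for every y ∈ Q the function ψ_δ(·,y) is convex with ψ_δ(y,y) = 0 and 0 ≤ f(x) − (f_δ(y) + ψ_δ(x,y)) ≤ L·V[y](x) + δ for all x ∈ Q. Starting from x_0 ∈ Q, let x_{k+1} be a δ̃-inexact minimizer on Q of φ_{k+1}(x) = ψ_δ(x, x_k) + L·V[x_k](x) for each k ≥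 0. Let x_* be a minimizer of f on Q with V[x_0](x_*) ≤ R², and let x̄_N = (1/N) Σ_{k=0}^{N-1} x_{k+1}. Then f(x̄_N) − f(x_*) ≤ L R²/N + δ̃ + δ. -/
open Finset RealInnerProductSpace

/-!
Write `V y` for the Bregman divergence from `y`, and let `u` be an inexact minimizer of
`ψ y + L * V y`. Differentiability of `V y` at `u` lets us split the subgradient at `u`: after
subtracting `L • (d' u - d' y)` it becomes a subgradient of the convex model `ψ y`. With the
three-point identity `(d' u - d' y) (z - u) = V y z - V u z - V y u` this gives
`ψ y u + L * V y u ≤ ψ y z + L * V y z - L * V u z + δ̃`, and the model inequalities turn it into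
`f u ≤ f z + δ̃ + δ + L * V y z - L * V u z`. Along the iterates the divergences to a fixed `z`
telescope, the last one is nonnegative by convexity of `d`, and Jensen's inequality passes to the
average.
-/

section Averages

theorem sum_range_le_of_le_add_sub {α : Type*} [AddCommGroup α] [PartialOrder α]
    [IsOrderedAddMonoid α] {a b : ℕ → α} {c : α} {N : ℕ}
    (h : ∀ k < N, a k ≤ c + (b k - b (k + 1))) (hb : 0 ≤ b N) :
    ∑ k ∈ range N, a k ≤ N • c + b 0 :=
  calc ∑ k ∈ range N, a k
      ≤ ∑ k ∈ range N, (c + (b k - b (k + 1))) := sum_le_sum fun k hk => h k (mem_range.1 hk)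
    _ = N • c + (b 0 - b N) := by
      rw [sum_add_distrib, sum_const, card_range, sum_range_sub']
    _ ≤ N • c + b 0 := by gcongr; exact sub_le_self _ hb

variable {𝕜 E : Type*} [Field 𝕜] [LinearOrder 𝕜] [IsStrictOrderedRing 𝕜] [AddCommGroup E]
  [Module 𝕜 E] {Q : Set E} {f : E → 𝕜}

theorem convexOn_map_average_le {ι : Type*} {s : Finset ι} {x : ι → E} (hf : ConvexOn 𝕜 Q f)
    (hs : s.Nonempty) (hx : ∀ i ∈ s, x i ∈ Q) :
    f ((#s : 𝕜)⁻¹ • ∑ i ∈ s, x i) ≤ (#s : 𝕜)⁻¹ * ∑ i ∈ s, f (x i) := by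
  have hcard : (#s : 𝕜) ≠ 0 := Nat.cast_ne_zero.2 hs.card_ne_zero
  simpa only [smul_sum, mul_sum, smul_eq_mul] using
    hf.map_sum_le (w := fun _ => (#s : 𝕜)⁻¹) (fun _ _ => by positivity) (by simp [hcard]) hx

theorem convexOn_map_average_le_of_le_add_sub {x : ℕ → E} {b : ℕ → 𝕜} {c : 𝕜} {N : ℕ}
    (hf : ConvexOn 𝕜 Q f) (hN : 0 < N) (hx : ∀ k < N, x k ∈ Q)
    (h : ∀ k < N, f (x k) ≤ c + (b k - b (k + 1))) (hb : 0 ≤ b N) :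
    f ((N : 𝕜)⁻¹ • ∑ k ∈ range N, x k) ≤ c + b 0 / N := by
  have hN' : (N : 𝕜) ≠ 0 := Nat.cast_ne_zero.2 hN.ne'
  calc f ((N : 𝕜)⁻¹ • ∑ k ∈ range N, x k)
      ≤ (N : 𝕜)⁻¹ * ∑ k ∈ range N, f (x k) := by
        simpa only [card_range] using convexOn_map_average_le hf (nonempty_range_iff.2 hN.ne')
          fun k hk => hx k (mem_range.1 hk)
    _ ≤ (N : 𝕜)⁻¹ * (N • c + b 0) := by gcongr; exact sum_range_le_of_le_add_sub h hb
    _ = c + b 0 / N := by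
      rw [nsmul_eq_mul, mul_add, inv_mul_cancel_left₀ hN', inv_mul_eq_div]

end Averages

section NormedSpace

variable {E : Type*} [NormedAddCommGroup E] [NormedSpace ℝ E] {Q : Set E} {u y z : E}

section Subgradient

/-- The functional `g` is a subgradient at `u` of the restriction of `φ` to `Q`. Functionals take
the place of vectors so that no inner product is needed. -/
def HasSubgradientWithinAt (φ : E → ℝ) (g : StrongDual ℝ E) (Q : Set E) (u : E) : Prop :=
  ∀ z ∈ Q, φ u + g (z - u) ≤ φ z

/-- The point `u` is an `ε`-inexact minimizer of `φ` on `Q`: some subgradient at `u` is at least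
`-ε` on every displacement from `u` to a point of `Q`. -/
def IsInexactMinOn (φ : E → ℝ) (Q : Set E) (ε : ℝ) (u : E) : Prop :=
  ∃ g : StrongDual ℝ E, HasSubgradientWithinAt φ g Q u ∧ ∀ z ∈ Q, -ε ≤ g (z - u)

variable {p q : E → ℝ} {g q' : StrongDual ℝ E}

/- On the epigraph of `p`, the function `(z, s) ↦ s + q z - g z` is minimal at `(u, p u)` and
differentiable there; its derivative towards `(z, p z)` is nonnegative. -/
theorem HasSubgradientWithinAt.sub_of_add (h : HasSubgradientWithinAt (p + q) g Q u)
    (hp : ConvexOn ℝ Q p) (hq : HasFDerivWithinAt q q' Q u) (hu : u ∈ Q) :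
    HasSubgradientWithinAt p (g - q') Q u := by
  intro z hz
  let epi : Set (E × ℝ) := {w | w.1 ∈ Q ∧ p w.1 ≤ w.2}
  let F : E × ℝ → ℝ := fun w => w.2 + q w.1 - g w.1
  have hmin : IsMinOn F epi (u, p u) := by
    rintro ⟨v, s⟩ ⟨hv, hs⟩
    have hsub : p u + q u + (g v - g u) ≤ p v + q v := by simpa only [map_sub] using! h v hv
    change p u + q u - g u ≤ s + q v - g v
    linarith
  have hderiv : HasFDerivWithinAt F
      (.snd ℝ E ℝ + q'.comp (.fst ℝ E ℝ) - g.comp (.fst ℝ E ℝ)) epi (u, p u) :=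
    (hasFDerivWithinAt_snd.add (hq.comp (u, p u) hasFDerivWithinAt_fst fun _ hw => hw.1)).sub
      (g.hasFDerivWithinAt.comp (u, p u) hasFDerivWithinAt_fst (Set.mapsTo_univ _ _))
  have hdir : (z, p z) - (u, p u) ∈ posTangentConeAt epi (u, p u) :=
    sub_mem_posTangentConeAt_of_segment_subset
      (hp.convex_epigraph.segment_subset ⟨hu, le_rfl⟩ ⟨hz, le_rfl⟩)
  have hnonneg : 0 ≤ p z - p u + q' (z - u) - g (z - u) :=
    hmin.localize.hasFDerivWithinAt_nonneg hderiv hdir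
  rw [sub_apply]
  linarith

theorem hasSubgradientWithinAt_of_hasFDerivWithinAt (hq : ConvexOn ℝ Q q)
    (hq' : HasFDerivWithinAt q q' Q u) (hu : u ∈ Q) : HasSubgradientWithinAt q q' Q u := by
  have hzero : HasSubgradientWithinAt (q + -q) 0 Q u := fun z _ => by simp
  simpa only [zero_sub, neg_neg] using hzero.sub_of_add hq hq'.neg hu

end Subgradient

section Bregman

/-- The Bregman divergence `V[y](z)` of `d`, where `d' y` stands for the derivative of `d` at
`y`. -/
def bregman (d : E → ℝ) (d' : E → StrongDual ℝ E) (y z : E) : ℝ :=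
  d z - d y - d' y (z - y)

variable {d : E → ℝ} {d' : E → StrongDual ℝ E}

theorem bregman_nonneg (hd : ConvexOn ℝ Q d) (hd' : HasFDerivWithinAt d (d' y) Q y) (hy : y ∈ Q)
    (hz : z ∈ Q) : 0 ≤ bregman d d' y z := by
  have := hasSubgradientWithinAt_of_hasFDerivWithinAt hd hd' hy z hz
  rw [bregman]
  linarith

theorem hasFDerivWithinAt_bregman (hd' : HasFDerivWithinAt d (d' u) Q u) :
    HasFDerivWithinAt (bregman d d' y) (d' u - d' y) Q u :=
  (hd'.sub_const (d y)).sub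
    ((d' y).hasFDerivWithinAt.comp u ((hasFDerivWithinAt_id u Q).sub_const y)
      (Set.mapsTo_univ _ _))

theorem bregman_three_point (d : E → ℝ) (d' : E → StrongDual ℝ E) (y u z : E) :
    (d' u - d' y) (z - u) = bregman d d' y z - bregman d d' u z - bregman d d' y u := by
  simp only [bregman, sub_apply, map_sub]
  ring

theorem IsInexactMinOn.add_bregman_le {ψ : E → ℝ} {L ε : ℝ}
    (hmin : IsInexactMinOn (ψ + L • bregman d d' y) Q ε u) (hψ : ConvexOn ℝ Q ψ)
    (hd' : HasFDerivWithinAt d (d' u) Q u) (hu : u ∈ Q) (hz : z ∈ Q) :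
    ψ u + L * bregman d d' y u ≤
      ψ z + L * bregman d d' y z - L * bregman d d' u z + ε := by
  obtain ⟨g, hg, hε⟩ := hmin
  have hsub : ψ u + (g (z - u) - L * (d' u - d' y) (z - u)) ≤ ψ z :=
    hg.sub_of_add hψ ((hasFDerivWithinAt_bregman hd').const_smul L) hu z hz
  rw [bregman_three_point] at hsub
  linarith [hε z hz]

end Bregman

section GradientMethod

/-- The convex function `ψ` with value `c` is an inexact model of `f` on `Q`: the minorant `c + ψ`
of `f` is exact up to `D + δ`. A `(δ, L, V)`-model at `y` is the case `c = f_δ(y)`,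
`ψ = ψ_δ(·, y)`, `D = L • V[y]`, together with the normalization `ψ y = 0`. -/
structure IsInexactModelOn (f : E → ℝ) (c : ℝ) (ψ D : E → ℝ) (δ : ℝ) (Q : Set E) : Prop where
  convexOn : ConvexOn ℝ Q ψ
  gap_mem_Icc : ∀ z ∈ Q, f z - (c + ψ z) ∈ Set.Icc 0 (D z + δ)

variable {f d : E → ℝ} {d' : E → StrongDual ℝ E} {L δ ε : ℝ}

theorem IsInexactModelOn.apply_le_of_isInexactMinOn {c : ℝ} {ψ : E → ℝ}
    (hmodel : IsInexactModelOn f c ψ (L • bregman d d' y) δ Q)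
    (hmin : IsInexactMinOn (ψ + L • bregman d d' y) Q ε u)
    (hd' : HasFDerivWithinAt d (d' u) Q u) (hu : u ∈ Q) (hz : z ∈ Q) :
    f u ≤ f z + ε + δ + (L * bregman d d' y z - L * bregman d d' u z) := by
  have hupper : f u - (c + ψ u) ≤ L * bregman d d' y u + δ := (hmodel.gap_mem_Icc u hu).2
  have hlower : 0 ≤ f z - (c + ψ z) := (hmodel.gap_mem_Icc z hz).1
  linarith [hmin.add_bregman_le hmodel.convexOn hd' hu hz]

theorem gradient_method_relative_smoothness_general {x : ℕ → E} {c : ℕ → ℝ} {ψ : ℕ → E → ℝ}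
    {N : ℕ} (hf : ConvexOn ℝ Q f) (hd : ConvexOn ℝ Q d)
    (hd' : ∀ y ∈ Q, HasFDerivWithinAt d (d' y) Q y) (hL : 0 ≤ L) (hN : 0 < N)
    (hx : ∀ k ≤ N, x k ∈ Q)
    (hmodel : ∀ k < N, IsInexactModelOn f (c k) (ψ k) (L • bregman d d' (x k)) δ Q)
    (hmin : ∀ k < N, IsInexactMinOn (ψ k + L • bregman d d' (x k)) Q ε (x (k + 1)))
    (hz : z ∈ Q) :
    f ((N : ℝ)⁻¹ • ∑ k ∈ range N, x (k + 1)) ≤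
      f z + ε + δ + L * bregman d d' (x 0) z / N := by
  have hdescent : ∀ k < N, f (x (k + 1)) ≤
      f z + ε + δ + (L * bregman d d' (x k) z - L * bregman d d' (x (k + 1)) z) := fun k hk =>
    have hmem : x (k + 1) ∈ Q := hx (k + 1) hk
    (hmodel k hk).apply_le_of_isInexactMinOn (hmin k hk) (hd' _ hmem) hmem hz
  have hlast : 0 ≤ L * bregman d d' (x N) z :=
    mul_nonneg hL (bregman_nonneg hd (hd' _ (hx N le_rfl)) (hx N le_rfl) hz)
  exact convexOn_map_average_le_of_le_add_sub (b := fun k => L * bregman d d' (x k) z) hf hN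
    (fun k hk => hx (k + 1) hk) hdescent hlast

end GradientMethod

end NormedSpace

/-- **Gradient method under relative smoothness with an inexact model.**
`d` is convex and continuously differentiable (1-strong convexity is *not* assumed),
`V y x = d x - d y - ⟪Dd y, x - y⟫`, and `ψ y` is the model `ψ_δ(·, y)` with value `fδ y`,
forming a `(δ, L, V)`-model of `f` on `Q`. -/
theorem gradient_method_relative_smoothness
    {n : ℕ} (Q : Set (EuclideanSpace ℝ (Fin n)))
    (hQne : Q.Nonempty) (hQclosed : IsClosed Q) (hQconv : Convex ℝ Q)
    (f : EuclideanSpace ℝ (Fin n) → ℝ) (hfconv : ConvexOn ℝ Q f)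
    -- the prox-function `d`: convex and continuously differentiable
    (d : EuclideanSpace ℝ (Fin n) → ℝ) (hdconv : ConvexOn ℝ Q d)
    (Dd : EuclideanSpace ℝ (Fin n) → EuclideanSpace ℝ (Fin n))
    (hd_diff : ∀ z ∈ Q, HasGradientWithinAt d (Dd z) Q z)
    (hd_cont : ContinuousOn Dd Q)
    -- Bregman divergence
    (V : EuclideanSpace ℝ (Fin n) → EuclideanSpace ℝ (Fin n) → ℝ)
    (hV : ∀ y z, V y z = d z - d y - ⟪Dd y, z - y⟫)
    (L : ℝ) (hL : 0 < L) (δ δt : ℝ) (hδ : 0 ≤ δ) (hδt : 0 ≤ δt)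
    -- `(δ, L, V)`-model of `f` on `Q`: `ψ y = ψ_δ(·, y)` with value `fδ y = f_δ(y)`
    (ψ : EuclideanSpace ℝ (Fin n) → EuclideanSpace ℝ (Fin n) → ℝ)
    (fδ : EuclideanSpace ℝ (Fin n) → ℝ)
    (hmodel : ∀ y ∈ Q, ConvexOn ℝ Q (ψ y) ∧ ψ y y = 0 ∧
      ∀ z ∈ Q, 0 ≤ f z - (fδ y + ψ y z) ∧
        f z - (fδ y + ψ y z) ≤ L * V y z + δ)
    -- the iterates
    (N : ℕ) (hN : 0 < N)
    (x : ℕ → EuclideanSpace ℝ (Fin n)) (hxQ : ∀ k, x k ∈ Q)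
    -- `x_{k+1}` is a `δ̃`-inexact minimizer of `φ_{k+1}(z) = ψ (x k) z + L * V (x k) z` on `Q`
    (hmin : ∀ k, ∃ h : EuclideanSpace ℝ (Fin n),
      (∀ z ∈ Q, ψ (x k) z + L * V (x k) z ≥
        ψ (x k) (x (k + 1)) + L * V (x k) (x (k + 1)) + ⟪h, z - x (k + 1)⟫) ∧
      (∀ z ∈ Q, ⟪h, z - x (k + 1)⟫ ≥ -δt))
    -- the optimum
    (xstar : EuclideanSpace ℝ (Fin n)) (hxstarQ : xstar ∈ Q)
    (hxstar : ∀ z ∈ Q, f xstar ≤ f z)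
    (R : ℝ) (hR : V (x 0) xstar ≤ R ^ 2)
    -- averaged iterate
    (xbar : EuclideanSpace ℝ (Fin n))
    (hxbar : xbar = (N : ℝ)⁻¹ • ∑ k ∈ range N, x (k + 1)) :
    f xbar - f xstar ≤ L * R ^ 2 / N + δt + δ := by
  obtain rfl : V = bregman d fun y => InnerProductSpace.toDual ℝ _ (Dd y) := funext₂ hV
  have hbound := gradient_method_relative_smoothness_general hfconv hdconv
    (fun y hy => (hd_diff y hy).hasFDerivWithinAt) hL.le hN (fun k _ => hxQ k)
    (fun k _ => ⟨(hmodel _ (hxQ k)).1, (hmodel _ (hxQ k)).2.2⟩)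
    (fun k _ => let ⟨h, hsub, hle⟩ := hmin k; ⟨InnerProductSpace.toDual ℝ _ h, hsub, hle⟩) hxstarQ
  have hinit : L * bregman d (fun y => InnerProductSpace.toDual ℝ _ (Dd y)) (x 0) xstar / N ≤
      L * R ^ 2 / N := by gcongr
  rw [hxbar]
  linarith
end
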